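/- The infinite product ∏_{n=1}^{∞} cos(π / 2^{n+1}) converges to 2/π; that is, the partial products ∏_{n=1}^{N} cos(π/2^{n+1}) tend to 2/π as N → ∞. -/

import Mathlib

open Filter

/-!
The duplication formula `sin (2 * x) = 2 * sin x * cos x` reads `sinc (2 * x) = cos x * sinc x`.
Iterating it on halved arguments gives `(∏_{n=1}^N cos (x / 2 ^ n)) * sinc (x / 2 ^ N) = sinc x`,
and `sinc (x / 2 ^ N) → sinc 0 = 1`. This is Euler's product for `sinc x`; Viète's product is its
value at `x = π / 2`.
-/

theorem sinc_two_mul (x : ℝ) : Real.sinc (2 * x) = Real.cos x * Real.sinc x := by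
  rcases eq_or_ne x 0 with rfl | hx
  · simp
  · rw [Real.sinc_of_ne_zero hx, Real.sinc_of_ne_zero (mul_ne_zero two_ne_zero hx),
      Real.sin_two_mul]
    field_simp

theorem prod_cos_div_two_pow_mul_sinc (x : ℝ) (N : ℕ) :
    (∏ n ∈ Finset.Icc 1 N, Real.cos (x / 2 ^ n)) * Real.sinc (x / 2 ^ N) = Real.sinc x := by
  induction N with
  | zero => simp
  | succ N ih =>
    have two_mul_arg : 2 * (x / 2 ^ (N + 1)) = x / 2 ^ N := by
      field_simp
      ring
    rw [Finset.prod_Icc_succ_top (Nat.le_add_left 1 N), mul_assoc, ← sinc_two_mul, two_mul_arg, ih]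

theorem tendsto_sinc_div_two_pow (x : ℝ) :
    Tendsto (fun N : ℕ => Real.sinc (x / 2 ^ N)) atTop (nhds 1) := by
  have arg_tendsto : Tendsto (fun N : ℕ => x / 2 ^ N) atTop (nhds 0) :=
    (tendsto_pow_atTop_atTop_of_one_lt one_lt_two).const_div_atTop x
  simpa only [Real.sinc_zero, Function.comp_def] using
    (Real.continuous_sinc.tendsto 0).comp arg_tendsto

theorem viete_product_cos_general (x : ℝ) :
    Tendsto (fun N : ℕ => ∏ n ∈ Finset.Icc 1 N, Real.cos (x / 2 ^ n))
      atTop (nhds (Real.sinc x)) := by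
  have sinc_tendsto := tendsto_sinc_div_two_pow x
  have quotient_tendsto :
      Tendsto (fun N : ℕ => Real.sinc x / Real.sinc (x / 2 ^ N)) atTop (nhds (Real.sinc x)) := by
    simpa only [div_one, Pi.div_def] using
      tendsto_const_nhds.div sinc_tendsto one_ne_zero
  refine quotient_tendsto.congr' ?_
  filter_upwards [sinc_tendsto.eventually_ne one_ne_zero] with N sinc_ne_zero
  exact (eq_div_of_mul_eq sinc_ne_zero (prod_cos_div_two_pow_mul_sinc x N)).symm

theorem sinc_pi_div_two : Real.sinc (Real.pi / 2) = 2 / Real.pi := by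
  rw [Real.sinc_of_ne_zero (by positivity), Real.sin_pi_div_two, one_div_div]

/-- The trigonometric form of Viète's product:
`∏_{n=1}^∞ cos(π / 2^(n+1)) = 2/π`. -/
theorem viete_product_cos :
    Tendsto (fun N : ℕ => ∏ n ∈ Finset.Icc 1 N, Real.cos (Real.pi / 2 ^ (n + 1)))
      atTop (nhds (2 / Real.pi)) := by
  simpa only [sinc_pi_div_two, div_div, ← pow_succ'] using
    viete_product_cos_general (Real.pi / 2)
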